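/- arXiv:1406.4003 — 2 statements merged into one kernel-verified Lean document; each statement's English description precedes it below -/
import Mathlib

section
/- Let ρ ∈ 𝓤^inv. Then WPAA(ρ) equipped with the norm ‖f‖_∞ = sup_{t∈ℝ}(E‖f(t)‖²)^{1/2} is a Banach space; that is, every sequence (fₙ) in WPAA(ρ) that is Cauchy with respect to ‖·‖_∞ converges uniformly in square mean to a limit f that again belongs to WPAA(ρ). -/
open MeasureTheory Filter Set Topology

noncomputable section

section Defs

variable {E : Type*} [NormedAddCommGroup E]

/-- Stochastic continuity: `E‖x(t) − x(s)‖² → 0` as `t → s` (norms taken in `L²(P,H)`). -/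
def StochCont (x : ℝ → E) : Prop :=
  ∀ s : ℝ, Tendsto (fun t => ‖x t - x s‖ ^ 2) (𝓝 s) (𝓝 0)

/-- Stochastic boundedness: `sup_t E‖x(t)‖² < ∞`. -/
def StochBdd (x : ℝ → E) : Prop := ∃ M : ℝ, ∀ t : ℝ, ‖x t‖ ^ 2 ≤ M

/-- Square-mean almost automorphy (SAA). -/
def SAA (x : ℝ → E) : Prop :=
  StochCont x ∧
  ∀ s' : ℕ → ℝ, ∃ φ : ℕ → ℕ, StrictMono φ ∧ ∃ y : ℝ → E,
    (∀ t : ℝ, Tendsto (fun n => ‖x (t + s' (φ n)) - y t‖ ^ 2) atTop (𝓝 0)) ∧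
    (∀ t : ℝ, Tendsto (fun n => ‖y (t - s' (φ n)) - x t‖ ^ 2) atTop (𝓝 0))

/-- `μ(T,ρ) = ∫_{−T}^{T} ρ(t) dt`. -/
def muW (ρ : ℝ → ℝ) (T : ℝ) : ℝ := ∫ t in (-T)..T, ρ t

/-- `ρ ∈ 𝓤_∞`: positive, locally integrable, `μ(T,ρ) → ∞`. -/
def UInfty (ρ : ℝ → ℝ) : Prop :=
  (∀ t, 0 < ρ t) ∧ MeasureTheory.LocallyIntegrable ρ ∧ Tendsto (muW ρ) atTop atTop

/-- The ergodic-zero class `SPAA₀(ρ)`. Note `(E‖x(t)‖²)^{1/2} = ‖x t‖` in `L²(P,H)`. -/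
def SPAA0 (ρ : ℝ → ℝ) (x : ℝ → E) : Prop :=
  StochCont x ∧ StochBdd x ∧
  Tendsto (fun T => (muW ρ T)⁻¹ * ∫ t in (-T)..T, ‖x t‖ * ρ t) atTop (𝓝 0)

/-- `ρ ∈ 𝓤^inv`: `ρ ∈ 𝓤_∞` and `SPAA₀(ρ)` (for `F`-valued processes) is translation invariant. -/
def UInvSp (F : Type*) [NormedAddCommGroup F] (ρ : ℝ → ℝ) : Prop :=
  UInfty ρ ∧ ∀ x : ℝ → F, SPAA0 ρ x → ∀ τ : ℝ, SPAA0 ρ fun t => x (t + τ)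

/-- Square-mean weighted pseudo almost automorphy `WPAA(ρ)`. -/
def WPAA (ρ : ℝ → ℝ) (f : ℝ → E) : Prop :=
  ∃ g h : ℝ → E, SAA g ∧ SPAA0 ρ h ∧ ∀ t, f t = g t + h t

/-- `L²_loc`: square integrability (of the second moment) on compact sets. -/
def L2loc (x : ℝ → E) : Prop :=
  ∀ K : Set ℝ, IsCompact K → IntegrableOn (fun s => ‖x s‖ ^ 2) K

/-- `S²`-almost automorphy (`AS²`). -/
def AS2 (x : ℝ → E) : Prop :=
  L2loc x ∧
  ∀ s' : ℕ → ℝ, ∃ φ : ℕ → ℕ, StrictMono φ ∧ ∃ y : ℝ → E, L2loc y ∧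
    (∀ t : ℝ, Tendsto (fun n => ∫ s in t..(t + 1), ‖x (s + s' (φ n)) - y s‖ ^ 2) atTop (𝓝 0)) ∧
    (∀ t : ℝ, Tendsto (fun n => ∫ s in t..(t + 1), ‖y (s - s' (φ n)) - x s‖ ^ 2) atTop (𝓝 0))

/-- `BS²`: Stepanov boundedness. -/
def BS2 (x : ℝ → E) : Prop :=
  L2loc x ∧ ∃ M : ℝ, ∀ t : ℝ, (∫ s in t..(t + 1), ‖x s‖ ^ 2) ≤ M

/-- `h^b ∈ SPAA₀^{S²}(ρ)`. -/
def SPAA0S2 (ρ : ℝ → ℝ) (h : ℝ → E) : Prop :=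
  Tendsto (fun T => (muW ρ T)⁻¹ *
    ∫ t in (-T)..T, Real.sqrt (∫ s in t..(t + 1), ‖h s‖ ^ 2) * ρ t) atTop (𝓝 0)

/-- `S²`-weighted pseudo almost automorphy `WPAAS²(ρ)`. -/
def WPAAS2 (ρ : ℝ → ℝ) (f : ℝ → E) : Prop :=
  BS2 f ∧ ∃ g h : ℝ → E, AS2 g ∧ SPAA0S2 ρ h ∧ ∀ t, f t = g t + h t

/-- `ρ₁ ∼ ρ₂`: the quotient `ρ₁/ρ₂` is bounded with positive infimum. -/
def equivW (ρ₁ ρ₂ : ℝ → ℝ) : Prop :=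
  (∃ C : ℝ, ∀ t, ρ₁ t / ρ₂ t ≤ C) ∧ (∃ c > 0, ∀ t, c ≤ ρ₁ t / ρ₂ t)

/-- `ρ ∈ 𝓤_T`: `ρ ∈ 𝓤_∞` and `ρ ∼ ρ(· + s)` for every `s`. -/
def UT (ρ : ℝ → ℝ) : Prop :=
  UInfty ρ ∧ ∀ s : ℝ, equivW ρ fun t => ρ (t + s)

/-- `f(·,x) ∈ L²_loc` for each `x`. -/
def L2locF (f : ℝ → E → E) : Prop := ∀ x : E, L2loc fun t => f t x

/-- Two-variable `S²`-almost automorphy `AS²(ℝ×L²(P,H))`. -/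
def AS2F (f : ℝ → E → E) : Prop :=
  L2locF f ∧
  ∀ s' : ℕ → ℝ, ∃ φ : ℕ → ℕ, StrictMono φ ∧ ∃ g : ℝ → E → E, L2locF g ∧
    (∀ t : ℝ, ∀ x : E,
      Tendsto (fun n => ∫ s in t..(t + 1), ‖f (s + s' (φ n)) x - g s x‖ ^ 2) atTop (𝓝 0)) ∧
    (∀ t : ℝ, ∀ x : E,
      Tendsto (fun n => ∫ s in t..(t + 1), ‖g (s - s' (φ n)) x - f s x‖ ^ 2) atTop (𝓝 0))

/-- Uniform stochastic continuity on bounded subsets, uniformly in `t`. -/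
def UnifStochCont (f : ℝ → E → E) : Prop :=
  ∀ K' : Set E, Bornology.IsBounded K' → ∀ ε > 0, ∃ δ > 0,
    ∀ x ∈ K', ∀ y ∈ K', ‖x - y‖ ^ 2 < δ → ∀ t : ℝ, ‖f t x - f t y‖ ^ 2 < ε

/-- `h^b ∈ SPAA₀^{S²}(ℝ×L²(P,H),ρ)`. -/
def SPAA0S2F (ρ : ℝ → ℝ) (h : ℝ → E → E) : Prop :=
  ∀ x : E, SPAA0S2 ρ fun t => h t x

end Defs

variable {Ω : Type*} [MeasurableSpace Ω] {P : Measure Ω} [IsProbabilityMeasure P]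
variable {H : Type*} [NormedAddCommGroup H] [InnerProductSpace ℝ H] [CompleteSpace H]
  [SecondCountableTopology H]

/-!
Uniform limits preserve both `SAA` (by diagonal extraction) and `SPAA0 ρ`, so the point is to
split the limit. If `f = g + h` with `g` almost automorphic and `h` ergodic, then every value
`g t₀` is nearly attained by `g` on a set of times finitely many translates of which cover `ℝ`.
Were `f` to stay away from `g t₀`, the corresponding finite sum of translates of `‖h‖` would be
bounded below, although translation invariance makes its weighted mean vanish. Hence the range of
`g` lies in the closure of the range of `f`; applied to differences, this makes the almost
automorphic parts of a uniformly Cauchy sequence uniformly Cauchy.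
-/

section UniformCauchy

variable {α β γ : Type*}

lemma exists_tendstoUniformly_of_uniformCauchySeqOn_univ {ι : Type*} {p : Filter ι} [p.NeBot]
    [UniformSpace β] [CompleteSpace β] {F : ι → α → β} (hF : UniformCauchySeqOn F p univ) :
    ∃ f, TendstoUniformly F f p := by
  choose f hf using fun x => CompleteSpace.complete (hF.cauchy_map (mem_univ x))
  exact ⟨f, tendstoUniformlyOn_univ.1 (hF.tendstoUniformlyOn_of_tendsto fun x _ => hf x)⟩

lemma uniformCauchySeqOn_univ_of_forall_dist_le [PseudoMetricSpace β] [PseudoMetricSpace γ]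
    {F : ℕ → α → β} {G : ℕ → α → γ} (hF : UniformCauchySeqOn F atTop univ)
    (h : ∀ m n C, (∀ x, dist (F m x) (F n x) ≤ C) → ∀ x, dist (G m x) (G n x) ≤ C) :
    UniformCauchySeqOn G atTop univ := by
  rw [Metric.uniformCauchySeqOn_iff] at hF ⊢
  intro ε hε
  obtain ⟨N, hN⟩ := hF (ε / 2) (half_pos hε)
  refine ⟨N, fun m hm n hn x _ => ?_⟩
  exact (h m n _ (fun x => (hN m hm n hn x (mem_univ x)).le) x).trans_lt (half_lt_self hε)

end UniformCauchy

section DiagonalExtraction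

lemma exists_strictMono_forall_tendsto {l : ℕ → Filter ℕ} (hl : Antitone l) (h0 : l 0 ≤ atTop)
    [∀ k, (l k).NeBot] [∀ k, (l k).IsCountablyGenerated] :
    ∃ d : ℕ → ℕ, StrictMono d ∧ ∀ k, Tendsto d atTop (l k) := by
  have : (⨅ k, l k).NeBot := iInf_neBot_of_directed' hl.directed_ge inferInstance
  obtain ⟨u, hu⟩ := exists_seq_tendsto (⨅ k, l k)
  obtain ⟨φ, hφ, huφ⟩ :=
    strictMono_subseq_of_tendsto_atTop (hu.mono_right ((iInf_le l 0).trans h0))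
  exact ⟨u ∘ φ, huφ, fun k => (hu.mono_right (iInf_le l k)).comp hφ.tendsto_atTop⟩

lemma exists_strictMono_forall_of_forall_exists {α : Type*} {p : ℕ → Filter α → Prop}
    (hp : ∀ k, Antitone (p k))
    (h : ∀ k (s : ℕ → α), ∃ φ : ℕ → ℕ, StrictMono φ ∧ p k (map (s ∘ φ) atTop)) (s : ℕ → α) :
    ∃ d : ℕ → ℕ, StrictMono d ∧ ∀ k, p k (map (s ∘ d) atTop) := by
  choose ψ hψ hpψ using h
  obtain ⟨Φ, hΦ_zero, hΦ_succ⟩ : ∃ Φ : ℕ → ℕ → ℕ,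
      Φ 0 = id ∧ ∀ k, Φ (k + 1) = Φ k ∘ ψ k (s ∘ Φ k) :=
    ⟨fun k => Nat.rec id (fun k φ => φ ∘ ψ k (s ∘ φ)) k, rfl, fun _ => rfl⟩
  have hanti : Antitone fun k => map (Φ k) atTop := antitone_nat_of_succ_le fun k => by
    rw [hΦ_succ, ← map_map]
    exact map_mono (hψ k (s ∘ Φ k)).tendsto_atTop
  have hzero : map (Φ 0) atTop ≤ atTop := by rw [hΦ_zero, map_id]
  obtain ⟨d, hd, hdΦ⟩ := exists_strictMono_forall_tendsto hanti hzero
  refine ⟨d, hd, fun k => hp k ?_ (hpψ k (s ∘ Φ k))⟩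
  rw [Function.comp_assoc, ← hΦ_succ, ← map_map, ← map_map]
  exact map_mono (hdΦ (k + 1))

end DiagonalExtraction

/-- `y` is the limit of the translates of `x` along `l`, and translating `y` back recovers `x`: the
relation between a process and its limit in the definition of almost automorphy. The filter `l`
on translations replaces the sequence `sₙ`, so that passing to a subsequence shrinks `l`. -/
structure IsReturningLimit {G X : Type*} [AddGroup G] [TopologicalSpace X]
    (l : Filter G) (x y : G → X) : Prop where
  tendsto_add : ∀ t, Tendsto (fun r => x (t + r)) l (𝓝 (y t))
  tendsto_sub : ∀ t, Tendsto (fun r => y (t - r)) l (𝓝 (x t))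

section IsReturningLimit

variable {G X : Type*} [AddGroup G] {l l' : Filter G}

lemma isReturningLimit_map_iff [TopologicalSpace X] {ι : Type*} {p : Filter ι} {s : ι → G}
    {x y : G → X} : IsReturningLimit (map s p) x y ↔
      (∀ t, Tendsto (fun i => x (t + s i)) p (𝓝 (y t))) ∧
      ∀ t, Tendsto (fun i => y (t - s i)) p (𝓝 (x t)) :=
  ⟨fun h => ⟨h.tendsto_add, h.tendsto_sub⟩, fun h => ⟨h.1, h.2⟩⟩

namespace IsReturningLimit

lemma mono [TopologicalSpace X] {x y : G → X} (h : IsReturningLimit l x y) (hl : l' ≤ l) :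
    IsReturningLimit l' x y :=
  ⟨fun t => (h.tendsto_add t).mono_left hl, fun t => (h.tendsto_sub t).mono_left hl⟩

lemma sub [TopologicalSpace X] [Sub X] [ContinuousSub X] {x x' y y' : G → X}
    (h : IsReturningLimit l x y) (h' : IsReturningLimit l x' y') :
    IsReturningLimit l (fun t => x t - x' t) (fun t => y t - y' t) :=
  ⟨fun t => (h.tendsto_add t).sub (h'.tendsto_add t),
    fun t => (h.tendsto_sub t).sub (h'.tendsto_sub t)⟩

lemma dist_le [PseudoMetricSpace X] [l.NeBot] {x x' y y' : G → X} {C : ℝ}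
    (h : IsReturningLimit l x y) (h' : IsReturningLimit l x' y')
    (hC : ∀ t, dist (x t) (x' t) ≤ C) (t : G) : dist (y t) (y' t) ≤ C :=
  le_of_tendsto ((h.tendsto_add t).dist (h'.tendsto_add t)) (.of_forall fun _ => hC _)

lemma of_tendstoUniformly [UniformSpace X] {ι : Type*} {p : Filter ι} [p.NeBot]
    {x y : ι → G → X} {x' y' : G → X} (h : ∀ i, IsReturningLimit l (x i) (y i))
    (hx : TendstoUniformly x x' p) (hy : TendstoUniformly y y' p) :
    IsReturningLimit l x' y' where
  tendsto_add t := (hx.comp fun r => t + r).tendsto_of_eventually_tendsto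
    (.of_forall fun i => (h i).tendsto_add t) (hy.tendsto_at t)
  tendsto_sub t := (hy.comp fun r => t - r).tendsto_of_eventually_tendsto
    (.of_forall fun i => (h i).tendsto_sub t) (hx.tendsto_at t)

end IsReturningLimit

end IsReturningLimit

section SquareNorm

variable {E : Type*}

lemma tendsto_norm_sub_sq_zero_iff [SeminormedAddCommGroup E] {α : Type*} {l : Filter α}
    {x : α → E} {y : E} :
    Tendsto (fun a => ‖x a - y‖ ^ 2) l (𝓝 0) ↔ Tendsto x l (𝓝 y) := by
  rw [tendsto_iff_norm_sub_tendsto_zero (f := x)]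
  refine ⟨fun h => ?_, fun h => by simpa using h.pow 2⟩
  simpa only [Real.sqrt_sq (norm_nonneg _), Real.sqrt_zero] using h.sqrt

variable [NormedAddCommGroup E] {x : ℝ → E}

lemma stochCont_iff_continuous : StochCont x ↔ Continuous x := by
  simp only [StochCont, tendsto_norm_sub_sq_zero_iff, continuous_iff_continuousAt, ContinuousAt]

lemma stochBdd_iff_exists_norm_le : StochBdd x ↔ ∃ M : ℝ, ∀ t, ‖x t‖ ≤ M :=
  ⟨fun ⟨M, hM⟩ => ⟨√M, fun t => Real.le_sqrt_of_sq_le (hM t)⟩,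
    fun ⟨M, hM⟩ => ⟨M ^ 2, fun t => pow_le_pow_left₀ (norm_nonneg _) (hM t) 2⟩⟩

end SquareNorm

section AlmostAutomorphic

variable {E : Type*} [NormedAddCommGroup E]

lemma saa_iff {x : ℝ → E} : SAA x ↔ Continuous x ∧
    ∀ s : ℕ → ℝ, ∃ φ : ℕ → ℕ, StrictMono φ ∧
      ∃ y, IsReturningLimit (map (s ∘ φ) atTop) x y := by
  simp only [SAA, stochCont_iff_continuous, tendsto_norm_sub_sq_zero_iff, isReturningLimit_map_iff,
    Function.comp_apply]

namespace SAA

lemma sub {x z : ℝ → E} (hx : SAA x) (hz : SAA z) : SAA fun t => x t - z t := by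
  rw [saa_iff] at *
  refine ⟨hx.1.sub hz.1, fun s => ?_⟩
  obtain ⟨φ, hφ, y, hy⟩ := hx.2 s
  obtain ⟨ψ, hψ, w, hw⟩ := hz.2 (s ∘ φ)
  have hle : map (s ∘ φ ∘ ψ) atTop ≤ map (s ∘ φ) atTop :=
    map_mono (m := s ∘ φ) hψ.tendsto_atTop
  exact ⟨φ ∘ ψ, hφ.comp hψ, _, (hy.mono hle).sub hw⟩

lemma of_tendstoUniformly [CompleteSpace E] {x : ℕ → ℝ → E} {X : ℝ → E} (hx : ∀ k, SAA (x k))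
    (hX : TendstoUniformly x X atTop) : SAA X := by
  simp only [saa_iff] at hx ⊢
  refine ⟨hX.continuous (.of_forall fun k => (hx k).1), fun s => ?_⟩
  obtain ⟨d, hd, hlim⟩ := exists_strictMono_forall_of_forall_exists
    (p := fun k l => ∃ y, IsReturningLimit l (x k) y)
    (fun _ _ _ hl ⟨y, hy⟩ => ⟨y, hy.mono hl⟩) (fun k => (hx k).2) s
  choose y hy using hlim
  obtain ⟨Y, hY⟩ := exists_tendstoUniformly_of_uniformCauchySeqOn_univ
    (uniformCauchySeqOn_univ_of_forall_dist_le hX.tendstoUniformlyOn.uniformCauchySeqOn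
      fun m n _ hC => (hy m).dist_le (hy n) hC)
  exact ⟨d, hd, Y, .of_tendstoUniformly hy hX hY⟩

lemma exists_finset_dist_lt {u : ℝ → E} (hu : SAA u) (t₀ : ℝ) {ε : ℝ} (hε : 0 < ε) :
    ∃ S : Finset ℝ, ∀ t, ∃ s ∈ S, dist (u (t₀ + (t - s))) (u t₀) < ε := by
  by_contra! hfar
  obtain ⟨s, -, hs⟩ := exists_seq_of_forall_finset_exists (fun _ : ℝ => True)
    (fun r t => ε ≤ dist (u (t₀ + (t - r))) (u t₀)) fun S _ => (hfar S).imp fun _ h => ⟨trivial, h⟩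
  obtain ⟨φ, hφ, y, hy⟩ := (saa_iff.1 hu).2 s
  obtain ⟨hxy, hyx⟩ := isReturningLimit_map_iff.1 hy
  have hy_far : ∀ j, ε ≤ dist (y (t₀ - s (φ j))) (u t₀) := fun j => by
    refine ge_of_tendsto ((hxy (t₀ - s (φ j))).dist tendsto_const_nhds) ?_
    filter_upwards [eventually_gt_atTop j] with n hn
    rw [Function.comp_apply, sub_add_eq_add_sub, add_sub_assoc]
    exact hs (φ j) (φ n) (hφ hn)
  have hy_near : Tendsto (fun j => dist (y (t₀ - s (φ j))) (u t₀)) atTop (𝓝 0) :=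
    tendsto_iff_dist_tendsto_zero.1 (hyx t₀)
  exact hε.not_ge (ge_of_tendsto' hy_near hy_far)

end SAA

end AlmostAutomorphic

section WeightedMean

/-- The mean of `φ` over `[-T, T]` with respect to the weight `ρ`, whose vanishing as `T → ∞`
defines the ergodic class. Since `0⁻¹ = 0` it is only meaningful when `muW ρ T ≠ 0`. -/
def weightedMean (ρ φ : ℝ → ℝ) (T : ℝ) : ℝ := (muW ρ T)⁻¹ * ∫ t in (-T)..T, φ t * ρ t

variable {ρ φ ψ : ℝ → ℝ}

lemma intervalIntegrable_mul_of_locallyIntegrable (hρ : LocallyIntegrable ρ) (hφ : Continuous φ)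
    (a b : ℝ) : IntervalIntegrable (fun t => φ t * ρ t) volume a b :=
  (hρ.integrableOn_isCompact isCompact_uIcc).intervalIntegrable.continuousOn_mul hφ.continuousOn

lemma weightedMean_add (hρ : LocallyIntegrable ρ) (hφ : Continuous φ) (hψ : Continuous ψ) :
    weightedMean ρ (fun t => φ t + ψ t) = fun T => weightedMean ρ φ T + weightedMean ρ ψ T := by
  funext T
  simp only [weightedMean, add_mul, ← mul_add]
  rw [intervalIntegral.integral_add (intervalIntegrable_mul_of_locallyIntegrable hρ hφ _ _)
    (intervalIntegrable_mul_of_locallyIntegrable hρ hψ _ _)]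

lemma weightedMean_sum {ι : Type*} {S : Finset ι} {φ : ι → ℝ → ℝ} (hρ : LocallyIntegrable ρ)
    (hφ : ∀ i ∈ S, Continuous (φ i)) :
    weightedMean ρ (fun t => ∑ i ∈ S, φ i t) = fun T => ∑ i ∈ S, weightedMean ρ (φ i) T := by
  funext T
  simp only [weightedMean, Finset.sum_mul, ← Finset.mul_sum]
  rw [intervalIntegral.integral_finsetSum fun i hi =>
    intervalIntegrable_mul_of_locallyIntegrable hρ (hφ i hi) _ _]

namespace UInfty

lemma weightedMean_const (hρ : UInfty ρ) (c : ℝ) :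
    ∀ᶠ T in atTop, weightedMean ρ (fun _ => c) T = c := by
  filter_upwards [hρ.2.2.eventually_ne_atTop 0] with T hT
  rw [weightedMean, intervalIntegral.integral_const_mul, ← muW, mul_left_comm,
    inv_mul_cancel₀ hT, mul_one]

lemma weightedMean_mono (hρ : UInfty ρ) (hφ : Continuous φ) (hψ : Continuous ψ) (h : φ ≤ ψ) :
    ∀ᶠ T in atTop, weightedMean ρ φ T ≤ weightedMean ρ ψ T := by
  filter_upwards [hρ.2.2.eventually_ge_atTop 0, eventually_ge_atTop 0] with T hμ hT
  refine mul_le_mul_of_nonneg_left ?_ (inv_nonneg.2 hμ)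
  exact intervalIntegral.integral_mono (by linarith)
    (intervalIntegrable_mul_of_locallyIntegrable hρ.2.1 hφ _ _)
    (intervalIntegrable_mul_of_locallyIntegrable hρ.2.1 hψ _ _)
    fun t => mul_le_mul_of_nonneg_right (h t) (hρ.1 t).le

lemma le_of_tendsto_weightedMean (hρ : UInfty ρ) (hφ : Continuous φ) {a c : ℝ}
    (hlim : Tendsto (weightedMean ρ φ) atTop (𝓝 a)) (h : ∀ t, c ≤ φ t) : c ≤ a := by
  refine ge_of_tendsto hlim ?_
  filter_upwards [hρ.weightedMean_const c, hρ.weightedMean_mono continuous_const hφ h] with T hc hle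
  exact hc.ge.trans hle

lemma tendsto_weightedMean_zero (hρ : UInfty ρ) (hφ : Continuous φ) (h0 : ∀ t, 0 ≤ φ t)
    (h : ∀ ε > 0, ∃ ψ : ℝ → ℝ, Continuous ψ ∧ Tendsto (weightedMean ρ ψ) atTop (𝓝 0) ∧
      ∀ t, φ t ≤ ε + ψ t) :
    Tendsto (weightedMean ρ φ) atTop (𝓝 0) := by
  refine tendsto_order.2 ⟨fun a ha => ?_, fun ε hε => ?_⟩
  · filter_upwards [hρ.weightedMean_const 0, hρ.weightedMean_mono continuous_const hφ h0]
      with T hc hle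
    exact ha.trans_le (hc.ge.trans hle)
  · obtain ⟨ψ, hψ, hlim, hle⟩ := h (ε / 2) (half_pos hε)
    have hψ' : Continuous fun t => ε / 2 + ψ t := continuous_const.add hψ
    filter_upwards [hρ.weightedMean_const (ε / 2),
      hρ.weightedMean_mono hφ hψ' hle,
      hlim.eventually_lt_const (half_pos hε)] with T hc hmono hlt
    simp only [weightedMean_add hρ.2.1 continuous_const hψ, hc] at hmono
    linarith

end UInfty

end WeightedMean

section Ergodic

variable {E : Type*} [NormedAddCommGroup E] {ρ : ℝ → ℝ}

lemma spaa0_iff {x : ℝ → E} : SPAA0 ρ x ↔ Continuous x ∧ (∃ M : ℝ, ∀ t, ‖x t‖ ≤ M) ∧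
    Tendsto (weightedMean ρ fun t => ‖x t‖) atTop (𝓝 0) := by
  rw [SPAA0, stochCont_iff_continuous, stochBdd_iff_exists_norm_le]
  rfl

namespace SPAA0

lemma sub (hρ : UInfty ρ) {x z : ℝ → E} (hx : SPAA0 ρ x) (hz : SPAA0 ρ z) :
    SPAA0 ρ fun t => x t - z t := by
  rw [spaa0_iff] at *
  obtain ⟨hxc, ⟨A, hA⟩, hx0⟩ := hx
  obtain ⟨hzc, ⟨B, hB⟩, hz0⟩ := hz
  refine ⟨hxc.sub hzc, ⟨A + B, fun t => norm_sub_le_of_le (hA t) (hB t)⟩, ?_⟩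
  refine hρ.tendsto_weightedMean_zero (hxc.sub hzc).norm (fun t => norm_nonneg _) fun ε hε =>
    ⟨fun t => ‖x t‖ + ‖z t‖, hxc.norm.add hzc.norm, ?_, fun t => ?_⟩
  · simpa only [weightedMean_add hρ.2.1 hxc.norm hzc.norm, add_zero] using hx0.add hz0
  · exact (norm_sub_le _ _).trans (le_add_of_nonneg_left hε.le)

lemma of_tendstoUniformly (hρ : UInfty ρ) {ι : Type*} {p : Filter ι} [p.NeBot] {x : ι → ℝ → E}
    {X : ℝ → E} (hx : ∀ i, SPAA0 ρ (x i)) (hX : TendstoUniformly x X p) : SPAA0 ρ X := by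
  simp only [spaa0_iff] at hx ⊢
  have hXc : Continuous X := hX.continuous (.of_forall fun i => (hx i).1)
  have hle : ∀ ε > 0, ∃ i, ∀ t, ‖X t‖ ≤ ε + ‖x i t‖ := fun ε hε => by
    obtain ⟨i, hi⟩ := (Metric.tendstoUniformly_iff.1 hX ε hε).exists
    refine ⟨i, fun t => (norm_le_norm_sub_add (X t) (x i t)).trans ?_⟩
    gcongr
    exact dist_eq_norm (X t) (x i t) ▸ (hi t).le
  refine ⟨hXc, ?_, hρ.tendsto_weightedMean_zero hXc.norm (fun t => norm_nonneg _) fun ε hε => ?_⟩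
  · obtain ⟨i, hi⟩ := hle 1 one_pos
    obtain ⟨M, hM⟩ := (hx i).2.1
    exact ⟨1 + M, fun t => (hi t).trans (by gcongr; exact hM t)⟩
  · obtain ⟨i, hi⟩ := hle ε hε
    exact ⟨_, (hx i).1.norm, (hx i).2.2, hi⟩

end SPAA0

end Ergodic

section Decomposition

variable {E : Type*} [NormedAddCommGroup E] {ρ : ℝ → ℝ} {g g' h h' : ℝ → E}

lemma SAA.range_subset_closure_range_add (hρ : UInvSp E ρ) (hg : SAA g) (hh : SPAA0 ρ h) :
    range g ⊆ closure (range fun t => g t + h t) := by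
  rintro _ ⟨t₀, rfl⟩
  by_contra hnot
  obtain ⟨ε, hε, hfar⟩ : ∃ ε > 0, ∀ t, ε ≤ dist (g t₀) (g t + h t) := by
    simpa only [Metric.mem_closure_range_iff, not_forall, not_exists, not_lt, exists_prop] using
      hnot
  obtain ⟨S, hS⟩ := hg.exists_finset_dist_lt t₀ (half_pos hε)
  have hsum_ge : ∀ t, ε / 2 ≤ ∑ s ∈ S, ‖h (t + (t₀ - s))‖ := fun t => by
    obtain ⟨s, hs, hnear⟩ := hS t
    rw [show t₀ + (t - s) = t + (t₀ - s) by ring] at hnear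
    have htri := dist_triangle_left (g t₀) (g (t + (t₀ - s)) + h (t + (t₀ - s)))
      (g (t + (t₀ - s)))
    rw [dist_self_add_right] at htri
    calc ε / 2 ≤ ‖h (t + (t₀ - s))‖ := by linarith [hfar (t + (t₀ - s))]
      _ ≤ _ := Finset.single_le_sum (f := fun s => ‖h (t + (t₀ - s))‖)
        (fun _ _ => norm_nonneg _) hs
  have htrans : ∀ s, SPAA0 ρ fun t => h (t + (t₀ - s)) := fun s => hρ.2 h hh (t₀ - s)
  simp only [spaa0_iff] at htrans
  have hsum_lim : Tendsto (weightedMean ρ fun t => ∑ s ∈ S, ‖h (t + (t₀ - s))‖) atTop (𝓝 0) := by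
    rw [weightedMean_sum hρ.1.2.1 fun s _ => (htrans s).1.norm]
    simpa only [Finset.sum_const_zero] using tendsto_finsetSum S fun s _ => (htrans s).2.2
  have hsum_cont : Continuous fun t => ∑ s ∈ S, ‖h (t + (t₀ - s))‖ :=
    continuous_finsetSum S fun s _ => (htrans s).1.norm
  exact (half_pos hε).not_ge (hρ.1.le_of_tendsto_weightedMean hsum_cont hsum_lim hsum_ge)

lemma SAA.dist_le_of_dist_add_le (hρ : UInvSp E ρ) (hg : SAA g) (hg' : SAA g') (hh : SPAA0 ρ h)
    (hh' : SPAA0 ρ h') {C : ℝ} (hC : ∀ t, dist (g t + h t) (g' t + h' t) ≤ C) (t : ℝ) :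
    dist (g t) (g' t) ≤ C := by
  have hball : (range fun t => g t - g' t + (h t - h' t)) ⊆ Metric.closedBall 0 C := by
    rintro _ ⟨r, rfl⟩
    simpa only [mem_closedBall_zero_iff, dist_eq_norm, add_sub_add_comm] using hC r
  have hmem := (hg.sub hg').range_subset_closure_range_add hρ (hh.sub hρ.1 hh') (mem_range_self t)
  simpa only [mem_closedBall_zero_iff, dist_eq_norm] using
    closure_minimal hball Metric.isClosed_closedBall hmem

theorem WPAA.of_tendstoUniformly [CompleteSpace E] (hρ : UInvSp E ρ) {f : ℕ → ℝ → E} {F : ℝ → E}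
    (hf : ∀ n, WPAA ρ (f n)) (hF : TendstoUniformly f F atTop) : WPAA ρ F := by
  choose g h hg hh hfgh using hf
  have hg_cauchy : UniformCauchySeqOn g atTop univ :=
    uniformCauchySeqOn_univ_of_forall_dist_le hF.tendstoUniformlyOn.uniformCauchySeqOn
      fun m n C hC => (hg m).dist_le_of_dist_add_le hρ (hg n) (hh m) (hh n) fun t => by
        simpa only [hfgh] using hC t
  obtain ⟨G, hG⟩ := exists_tendstoUniformly_of_uniformCauchySeqOn_univ hg_cauchy
  have hh_lim : TendstoUniformly h (F - G) atTop := by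
    convert hF.sub hG using 1
    ext n t
    simp only [Pi.sub_apply, hfgh, add_sub_cancel_left]
  exact ⟨G, F - G, .of_tendstoUniformly hg hG, .of_tendstoUniformly hρ.1 hh hh_lim,
    fun t => (add_sub_cancel (G t) (F t)).symm⟩

end Decomposition

theorem WPAA_complete_general {E : Type*} [NormedAddCommGroup E] [CompleteSpace E]
    (ρ : ℝ → ℝ) (hρ : UInvSp E ρ) (f : ℕ → ℝ → E) (hf : ∀ n, WPAA ρ (f n))
    (hcauchy : ∀ ε > 0, ∃ N : ℕ, ∀ m ≥ N, ∀ n ≥ N, ∀ t : ℝ, ‖f m t - f n t‖ < ε) :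
    ∃ g : ℝ → E, WPAA ρ g ∧ ∀ ε > 0, ∃ N : ℕ, ∀ n ≥ N, ∀ t : ℝ, ‖f n t - g t‖ < ε := by
  have hunif : UniformCauchySeqOn f atTop univ := by
    simpa only [Metric.uniformCauchySeqOn_iff, mem_univ, forall_const, dist_eq_norm] using hcauchy
  obtain ⟨F, hF⟩ := exists_tendstoUniformly_of_uniformCauchySeqOn_univ hunif
  refine ⟨F, .of_tendstoUniformly hρ hf hF, ?_⟩
  simpa only [Metric.tendstoUniformly_iff, eventually_atTop, dist_eq_norm', ge_iff_le] using hF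

/-- Theorem 2.10. For `ρ ∈ 𝓤^inv`, `WPAA(ρ)` with the norm
`‖f‖_∞ = sup_t (E‖f(t)‖²)^{1/2}` is complete: every Cauchy sequence in `WPAA(ρ)`
converges uniformly in square mean to a limit that again lies in `WPAA(ρ)`. -/
theorem WPAA_complete
    (ρ : ℝ → ℝ) (hρ : UInvSp (Lp H 2 P) ρ)
    (f : ℕ → ℝ → Lp H 2 P) (hf : ∀ n, WPAA ρ (f n))
    (hcauchy : ∀ ε > 0, ∃ N : ℕ, ∀ m ≥ N, ∀ n ≥ N, ∀ t : ℝ, ‖f m t - f n t‖ < ε) :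
    ∃ g : ℝ → Lp H 2 P, WPAA ρ g ∧
      ∀ ε > 0, ∃ N : ℕ, ∀ n ≥ N, ∀ t : ℝ, ‖f n t - g t‖ < ε :=
  WPAA_complete_general ρ hρ f hf hcauchy
end
end

section
/- Let ρ ∈ 𝓤^inv. If f ∈ WPAA(ρ), then f ∈ WPAAS²(ρ); that is, every square-mean weighted pseudo almost automorphic process is S²-weighted pseudo almost automorphic (with the same weight ρ). -/
open MeasureTheory Filter Set Topology

noncomputable section

variable {Ω : Type*} [MeasurableSpace Ω] {P : Measure Ω} [IsProbabilityMeasure P]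
variable {H : Type*} [NormedAddCommGroup H] [InnerProductSpace ℝ H] [CompleteSpace H]
  [SecondCountableTopology H]

/-!
Stochastic continuity is continuity of `x : ℝ → L²(P, H)`, and an almost automorphic process is
bounded, so dominated convergence turns the pointwise limits defining `SAA` into the Stepanov limits
defining `AS2`.

For the ergodic part `h`, with `‖h‖ ≤ M`, regard the weighted mean over `[-T, T]` as the integral
against a probability measure `ν_T`. By Jensen's inequality and Fubini's theorem,
`(∫ (∫_t^{t+1} ‖h‖²)^{1/2} dν_T)² ≤ ∫_0^1 ∫ ‖h(t + s)‖² dν_T(t) ds`.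
The inner integral is at most `M ∫ ‖h(t + s)‖ dν_T(t)`, which tends to `0` for each `s` by
translation invariance, and it is bounded by `M²`, so dominated convergence in `s` applies.
-/

section FiniteMeasures

variable {α β ι : Type*} [MeasurableSpace α] [MeasurableSpace β] {l : Filter ι}

theorem integral_sqrt_le_sqrt_integral {ν : Measure α} [IsZeroOrProbabilityMeasure ν] {w : α → ℝ}
    (hw : Integrable w ν) (hw0 : ∀ a, 0 ≤ w a) : ∫ a, √(w a) ∂ν ≤ √(∫ a, w a ∂ν) := by
  rcases eq_zero_or_isProbabilityMeasure ν with rfl | _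
  · simp
  by_cases hsqrt : Integrable (fun a => √(w a)) ν
  · exact Real.strictConcaveOn_sqrt.concaveOn.le_map_integral Real.continuous_sqrt.continuousOn
      isClosed_Ici (Eventually.of_forall hw0) hw hsqrt
  · rw [integral_undef hsqrt]
    exact Real.sqrt_nonneg _

theorem tendsto_integral_sqrt_zero {ν : ι → Measure α} [∀ i, IsZeroOrProbabilityMeasure (ν i)]
    {w : α → ℝ} (hw : ∀ i, Integrable w (ν i)) (hw0 : ∀ a, 0 ≤ w a)
    (hlim : Tendsto (fun i => ∫ a, w a ∂ν i) l (𝓝 0)) :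
    Tendsto (fun i => ∫ a, √(w a) ∂ν i) l (𝓝 0) :=
  squeeze_zero (fun _ => integral_nonneg fun _ => Real.sqrt_nonneg _)
    (fun i => integral_sqrt_le_sqrt_integral (hw i) hw0) (by simpa using hlim.sqrt)

theorem tendsto_integral_sq_zero {ν : ι → Measure α} [∀ i, IsFiniteMeasure (ν i)] {v : α → ℝ}
    {M : ℝ} (hv : StronglyMeasurable v) (hv0 : ∀ a, 0 ≤ v a) (hvM : ∀ a, v a ≤ M)
    (hlim : Tendsto (fun i => ∫ a, v a ∂ν i) l (𝓝 0)) :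
    Tendsto (fun i => ∫ a, v a ^ 2 ∂ν i) l (𝓝 0) := by
  have hint : ∀ i, Integrable v (ν i) := fun i =>
    .of_bound hv.aestronglyMeasurable M <| Eventually.of_forall fun a => by
      simpa only [Real.norm_of_nonneg (hv0 a)] using hvM a
  have hle : ∀ i, ∫ a, v a ^ 2 ∂ν i ≤ M * ∫ a, v a ∂ν i := fun i => by
    rw [← integral_const_mul]
    refine integral_mono_of_nonneg (Eventually.of_forall fun a => sq_nonneg _)
      ((hint i).const_mul M) (Eventually.of_forall fun a => ?_)
    simpa only [sq] using mul_le_mul_of_nonneg_right (hvM a) (hv0 a)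
  exact squeeze_zero (fun i => integral_nonneg fun a => sq_nonneg _) hle
    (by simpa using hlim.const_mul M)

theorem tendsto_integral_integral_of_norm_le {G : Type*} [NormedAddCommGroup G] [NormedSpace ℝ G]
    [l.IsCountablyGenerated] {ν : ι → Measure α} [∀ i, IsZeroOrProbabilityMeasure (ν i)]
    {κ : Measure β} [IsFiniteMeasure κ] {F : α → β → G} {L : β → G} {M : ℝ}
    (hF : StronglyMeasurable (Function.uncurry F)) (hM : ∀ a b, ‖F a b‖ ≤ M)
    (hlim : ∀ b, Tendsto (fun i => ∫ a, F a b ∂ν i) l (𝓝 (L b))) :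
    Tendsto (fun i => ∫ a, ∫ b, F a b ∂κ ∂ν i) l (𝓝 (∫ b, L b ∂κ)) := by
  have hprod : ∀ i, Integrable (Function.uncurry F) ((ν i).prod κ) := fun i =>
    .of_bound hF.aestronglyMeasurable M <| Eventually.of_forall fun p => hM p.1 p.2
  have hbound : ∀ i b, ‖∫ a, F a b ∂ν i‖ ≤ |M| := fun i b =>
    calc ‖∫ a, F a b ∂ν i‖ ≤ |M| * (ν i).real univ :=
          norm_integral_le_of_norm_le_const <|
            Eventually.of_forall fun a => (hM a b).trans (le_abs_self M)
      _ ≤ |M| := mul_le_of_le_one_right (abs_nonneg M) measureReal_le_one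
  simp only [fun i => integral_integral_swap (hprod i)]
  exact tendsto_integral_filter_of_dominated_convergence (fun _ => |M|)
    (Eventually.of_forall fun i => (hprod i).integral_prod_right.aestronglyMeasurable)
    (Eventually.of_forall fun i => Eventually.of_forall (hbound i))
    (integrable_const _) (Eventually.of_forall hlim)

theorem tendsto_integral_sqrt_unit_window [l.IsCountablyGenerated] {ν : ι → Measure ℝ}
    [∀ i, IsZeroOrProbabilityMeasure (ν i)] {u : ℝ → ℝ} {M : ℝ} (hu : StronglyMeasurable u)
    (hu0 : ∀ t, 0 ≤ u t) (huM : ∀ t, u t ≤ M)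
    (hlim : ∀ τ, Tendsto (fun i => ∫ t, u (t + τ) ∂ν i) l (𝓝 0)) :
    Tendsto (fun i => ∫ t, √(∫ s in t..(t + 1), u s ^ 2) ∂ν i) l (𝓝 0) := by
  have hwindow : ∀ t,
      ∫ s in t..(t + 1), u s ^ 2 = ∫ s in Ioc (0 : ℝ) 1, u (t + s) ^ 2 := fun t => by
    rw [← intervalIntegral.integral_of_le zero_le_one,
      intervalIntegral.integral_comp_add_left (fun s => u s ^ 2), add_zero]
  simp only [hwindow]
  have hmeas : StronglyMeasurable (Function.uncurry fun t s => u (t + s) ^ 2) :=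
    (hu.comp_measurable measurable_add).pow 2
  have hbound : ∀ t s, ‖u (t + s) ^ 2‖ ≤ M ^ 2 := fun t s => by
    rw [Real.norm_of_nonneg (sq_nonneg _)]
    exact pow_le_pow_left₀ (hu0 _) (huM _) 2
  have hsq : ∀ s, Tendsto (fun i => ∫ t, u (t + s) ^ 2 ∂ν i) l (𝓝 0) := fun s =>
    tendsto_integral_sq_zero (hu.comp_measurable (measurable_add_const s)) (fun _ => hu0 _)
      (fun _ => huM _) (hlim s)
  refine tendsto_integral_sqrt_zero (fun i => ?_) (fun t => integral_nonneg fun s => sq_nonneg _) ?_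
  · exact (Integrable.of_bound hmeas.aestronglyMeasurable (M ^ 2) <|
      Eventually.of_forall fun p => hbound p.1 p.2).integral_prod_left
  · simpa only [integral_zero] using tendsto_integral_integral_of_norm_le hmeas hbound hsq

theorem integral_cond_withDensity {μ : Measure α} {s : Set α} (hs : MeasurableSet s) {ρ : α → ℝ}
    (hρ0 : ∀ a, 0 ≤ ρ a) (hρ : IntegrableOn ρ s μ) (u : α → ℝ) :
    ∫ a, u a ∂(ProbabilityTheory.cond (μ.withDensity fun a => ENNReal.ofReal (ρ a)) s) =
      (∫ a in s, ρ a ∂μ)⁻¹ * ∫ a in s, u a * ρ a ∂μ := by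
  have hmass : (μ.withDensity fun a => ENNReal.ofReal (ρ a)) s =
      ENNReal.ofReal (∫ a in s, ρ a ∂μ) := by
    rw [withDensity_apply _ hs, ofReal_integral_eq_lintegral_ofReal hρ (Eventually.of_forall hρ0)]
  rw [ProbabilityTheory.cond, integral_smul_measure, hmass, ENNReal.toReal_inv,
    ENNReal.toReal_ofReal (integral_nonneg hρ0), smul_eq_mul,
    setIntegral_withDensity_eq_setIntegral_toReal_smul₀ hρ.aemeasurable.ennreal_ofReal
      (Eventually.of_forall fun _ => ENNReal.ofReal_lt_top) _ hs]
  simp only [ENNReal.toReal_ofReal (hρ0 _), smul_eq_mul, mul_comm]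

end FiniteMeasures

/-- The law on `(-T, T]` with density proportional to `ρ`, integration against which is the weighted
mean in the definition of `SPAA₀(ρ)`. By the convention for `cond`, it is the zero measure when `ρ`
has mass `0` or `∞` on `(-T, T]`. -/
def weightLaw (ρ : ℝ → ℝ) (T : ℝ) : Measure ℝ :=
  ProbabilityTheory.cond (volume.withDensity fun t => ENNReal.ofReal (ρ t)) (Ioc (-T) T)

instance (ρ : ℝ → ℝ) (T : ℝ) : IsZeroOrProbabilityMeasure (weightLaw ρ T) :=
  inferInstanceAs (IsZeroOrProbabilityMeasure (ProbabilityTheory.cond _ _))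

theorem integral_weightLaw {ρ : ℝ → ℝ} (hρ0 : ∀ t, 0 ≤ ρ t) (hρ : LocallyIntegrable ρ) {T : ℝ}
    (hT : 0 ≤ T) (u : ℝ → ℝ) :
    ∫ t, u t ∂weightLaw ρ T = (muW ρ T)⁻¹ * ∫ t in (-T)..T, u t * ρ t := by
  have hint : IntegrableOn ρ (Ioc (-T) T) :=
    (hρ.integrableOn_isCompact isCompact_Icc).mono_set Ioc_subset_Icc_self
  rw [weightLaw, integral_cond_withDensity measurableSet_Ioc hρ0 hint, muW,
    intervalIntegral.integral_of_le (neg_le_self hT),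
    intervalIntegral.integral_of_le (neg_le_self hT)]

theorem tendsto_weightedMean_iff {ρ : ℝ → ℝ} (hρ0 : ∀ t, 0 ≤ ρ t) (hρ : LocallyIntegrable ρ)
    {u : ℝ → ℝ} {l : Filter ℝ} :
    Tendsto (fun T => (muW ρ T)⁻¹ * ∫ t in (-T)..T, u t * ρ t) atTop l ↔
      Tendsto (fun T => ∫ t, u t ∂weightLaw ρ T) atTop l :=
  tendsto_congr' <| (eventually_ge_atTop 0).mono fun _ hT =>
    (integral_weightLaw hρ0 hρ hT u).symm

section Stepanov

variable {E : Type*} [NormedAddCommGroup E]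

theorem tendsto_of_tendsto_norm_sub_sq {ι : Type*} {l : Filter ι} {x : ι → E} {a : E}
    (h : Tendsto (fun i => ‖x i - a‖ ^ 2) l (𝓝 0)) : Tendsto x l (𝓝 a) := by
  rw [tendsto_iff_norm_sub_tendsto_zero]
  simpa only [Real.sqrt_sq (norm_nonneg _), Real.sqrt_zero] using h.sqrt

theorem StochCont.continuous {x : ℝ → E} (h : StochCont x) : Continuous x :=
  continuous_iff_continuousAt.2 fun s => tendsto_of_tendsto_norm_sub_sq (h s)

theorem StochBdd.exists_norm_le {x : ℝ → E} (h : StochBdd x) : ∃ M, ∀ t, ‖x t‖ ≤ M :=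
  let ⟨M, hM⟩ := h
  ⟨√M, fun t => Real.le_sqrt_of_sq_le (hM t)⟩

theorem SAA.exists_norm_le {x : ℝ → E} (h : SAA x) : ∃ M, ∀ t, ‖x t‖ ≤ M := by
  by_contra! hunbdd
  choose s hs using fun n : ℕ => hunbdd n
  obtain ⟨φ, hφ, y, hy, -⟩ := h.2 s
  have hconv : Tendsto (fun n => ‖x (s (φ n))‖) atTop (𝓝 ‖y 0‖) := by
    simpa only [zero_add] using (tendsto_of_tendsto_norm_sub_sq (hy 0)).norm
  have hdiv : Tendsto (fun n => ‖x (s (φ n))‖) atTop atTop :=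
    tendsto_atTop_mono (fun n => (hs (φ n)).le)
      (tendsto_natCast_atTop_atTop.comp hφ.tendsto_atTop)
  exact not_tendsto_atTop_of_tendsto_nhds hconv hdiv

theorem tendsto_intervalIntegral_norm_sq_zero {ι : Type*} {l : Filter ι} [l.IsCountablyGenerated]
    {F : ι → ℝ → E} {M a b : ℝ} (hF : ∀ i, AEStronglyMeasurable (F i)) (hM : ∀ i s, ‖F i s‖ ≤ M)
    (hlim : ∀ s, Tendsto (fun i => ‖F i s‖ ^ 2) l (𝓝 0)) :
    Tendsto (fun i => ∫ s in a..b, ‖F i s‖ ^ 2) l (𝓝 0) := by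
  rw [← intervalIntegral.integral_zero (a := a) (b := b) (μ := volume)]
  refine intervalIntegral.tendsto_integral_filter_of_dominated_convergence (fun _ => M ^ 2)
    (Eventually.of_forall fun i => ((hF i).norm.pow 2).restrict)
    (Eventually.of_forall fun i => Eventually.of_forall fun s _ => ?_)
    intervalIntegrable_const (Eventually.of_forall fun s _ => hlim s)
  simpa only [norm_pow, norm_norm] using pow_le_pow_left₀ (norm_nonneg _) (hM i s) 2

theorem L2loc.of_norm_le {x : ℝ → E} {M : ℝ} (hx : AEStronglyMeasurable x) (hM : ∀ s, ‖x s‖ ≤ M) :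
    L2loc x := fun K hK => by
  refine Measure.integrableOn_of_bounded (M := M ^ 2) hK.measure_lt_top.ne
    (hx.norm.pow 2) (Eventually.of_forall fun s => ?_)
  simpa only [norm_pow, norm_norm] using pow_le_pow_left₀ (norm_nonneg _) (hM s) 2

theorem BS2.of_norm_le {x : ℝ → E} {M : ℝ} (hx : AEStronglyMeasurable x) (hM : ∀ s, ‖x s‖ ≤ M) :
    BS2 x := by
  refine ⟨.of_norm_le hx hM, M ^ 2, fun t => ?_⟩
  have hbound : ‖∫ s in t..(t + 1), ‖x s‖ ^ 2‖ ≤ M ^ 2 * |t + 1 - t| :=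
    intervalIntegral.norm_integral_le_of_norm_le_const fun s _ => by
      simpa only [norm_pow, norm_norm] using pow_le_pow_left₀ (norm_nonneg _) (hM s) 2
  simpa using (le_abs_self _).trans hbound

theorem SAA.as2 {g : ℝ → E} (hg : SAA g) : AS2 g := by
  obtain ⟨M, hM⟩ := hg.exists_norm_le
  have hgm : StronglyMeasurable g := hg.1.continuous.stronglyMeasurable
  refine ⟨.of_norm_le hgm.aestronglyMeasurable hM, fun s => ?_⟩
  obtain ⟨φ, hφ, y, hgy, hyg⟩ := hg.2 s
  have hlim : ∀ t, Tendsto (fun n => g (t + s (φ n))) atTop (𝓝 (y t)) := fun t =>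
    tendsto_of_tendsto_norm_sub_sq (hgy t)
  have hgsm : ∀ n, StronglyMeasurable fun t => g (t + s (φ n)) := fun n =>
    hgm.comp_measurable (measurable_add_const _)
  have hym : StronglyMeasurable y :=
    stronglyMeasurable_of_tendsto atTop hgsm (tendsto_pi_nhds.2 hlim)
  have hyM : ∀ t, ‖y t‖ ≤ M := fun t =>
    le_of_tendsto (hlim t).norm (Eventually.of_forall fun n => hM _)
  refine ⟨φ, hφ, y, .of_norm_le hym.aestronglyMeasurable hyM, fun t => ?_, fun t => ?_⟩
  · exact tendsto_intervalIntegral_norm_sq_zero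
      (fun n => ((hgsm n).sub hym).aestronglyMeasurable)
      (fun n r => norm_sub_le_of_le (hM _) (hyM r)) hgy
  · exact tendsto_intervalIntegral_norm_sq_zero
      (fun n => ((hym.comp_measurable (measurable_sub_const _)).sub hgm).aestronglyMeasurable)
      (fun n r => norm_sub_le_of_le (hyM _) (hM r)) hyg

theorem SPAA0.spaa0S2 {ρ : ℝ → ℝ} (hρ : UInvSp E ρ) {h : ℝ → E} (hh : SPAA0 ρ h) :
    SPAA0S2 ρ h := by
  obtain ⟨⟨hpos, hloc, -⟩, hinv⟩ := hρ
  have hρ0 : ∀ t, 0 ≤ ρ t := fun t => (hpos t).le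
  obtain ⟨M, hM⟩ := hh.2.1.exists_norm_le
  have htranslate : ∀ τ, Tendsto (fun T => ∫ t, ‖h (t + τ)‖ ∂weightLaw ρ T) atTop (𝓝 0) :=
    fun τ => (tendsto_weightedMean_iff hρ0 hloc).1 (hinv h hh τ).2.2
  exact (tendsto_weightedMean_iff hρ0 hloc).2 <|
    tendsto_integral_sqrt_unit_window hh.1.continuous.norm.stronglyMeasurable
      (fun t => norm_nonneg (h t)) hM htranslate

theorem WPAA.bs2 {ρ : ℝ → ℝ} {f : ℝ → E} (hf : WPAA ρ f) : BS2 f := by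
  obtain ⟨g, h, hg, hh, hfgh⟩ := hf
  obtain ⟨M, hM⟩ := hg.exists_norm_le
  obtain ⟨N, hN⟩ := hh.2.1.exists_norm_le
  obtain rfl : f = g + h := funext hfgh
  exact .of_norm_le (hg.1.continuous.add hh.1.continuous).aestronglyMeasurable
    fun t => norm_add_le_of_le (hM t) (hN t)

theorem WPAA_subset_WPAAS2_general {ρ : ℝ → ℝ} (hρ : UInvSp E ρ) {f : ℝ → E} (hf : WPAA ρ f) :
    WPAAS2 ρ f :=
  let ⟨g, h, hg, hh, hfgh⟩ := hf
  ⟨hf.bs2, g, h, hg.as2, hh.spaa0S2 hρ, hfgh⟩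

end Stepanov

/-- Lemma 3.2. If `ρ ∈ 𝓤^inv` and `f ∈ WPAA(ρ)`, then
`f ∈ WPAAS²(ρ)`. -/
theorem WPAA_subset_WPAAS2
    (ρ : ℝ → ℝ) (hρ : UInvSp (Lp H 2 P) ρ)
    (f : ℝ → Lp H 2 P) (hf : WPAA ρ f) :
    WPAAS2 ρ f :=
  WPAA_subset_WPAAS2_general hρ hf
end
end
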